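/- Assume 1 − (d−1)ν − (2K−1)dμ_B > 0. Let S ⊆ I1 with |S| = k (0 ≤ k < K), let P_S denote the orthogonal projection onto the column span of the blocks {A_l : l ∈ S}, and set v = Σ_{l∈I1∖S} A_l x̃_l. Then max_{l∈I1} ‖A_l^T (I − P_S) v‖_2 ≥ (1 − (d−1)ν − (2K−2k−1)dμ_B) · min_{l∈I1} ‖x̃_l‖_2, and this lower bound is positive whenever min_{l∈I1} ‖x̃_l‖_2 > 0. -/

import Mathlib

/- Setting: a measurement matrix `A ∈ ℝ^{m×n}` with `n = L·d`, partitioned into `L` column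
blocks of size `m×d`; columns are indexed by pairs `(l, j)` (block `l`, position `j`). -/

noncomputable section

open Finset Matrix

/-- Euclidean (ℓ₂) norm of a finitely indexed real vector. -/
def e2norm {ι : Type*} [Fintype ι] (v : ι → ℝ) : ℝ := Real.sqrt (∑ i, v i ^ 2)

/-- Euclidean inner (dot) product of two real vectors. -/
def dotp {ι : Type*} [Fintype ι] (u v : ι → ℝ) : ℝ := ∑ i, u i * v i

/-- The `(l, j)` column of the block matrix `A` (block `l`, position `j` inside the block). -/
def acol {m L d : ℕ} (A : Matrix (Fin m) (Fin L × Fin d) ℝ) (l : Fin L) (j : Fin d) :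
    Fin m → ℝ :=
  fun i => A i (l, j)

/-- `A_lᵀ v` : correlation of the `l`-th block of `A` with a vector `v ∈ ℝ^m`. -/
def blkT {m L d : ℕ} (A : Matrix (Fin m) (Fin L × Fin d) ℝ) (l : Fin L) (v : Fin m → ℝ) :
    Fin d → ℝ :=
  fun j => dotp (acol A l j) v

/-- Spectral norm (largest singular value) `ρ(X)` of a real matrix, as the supremum of
`‖Xu‖₂ / ‖u‖₂` over nonzero `u`. -/
def specNorm {p q : ℕ} (X : Matrix (Fin p) (Fin q) ℝ) : ℝ :=
  ⨆ u : {u : Fin q → ℝ // u ≠ 0}, e2norm (X *ᵥ u.1) / e2norm u.1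

/-- The `d × d` cross-Gram matrix `A_iᵀ A_j` of two blocks of `A`. -/
def bgram {m L d : ℕ} (A : Matrix (Fin m) (Fin L × Fin d) ℝ) (i j : Fin L) :
    Matrix (Fin d) (Fin d) ℝ :=
  fun a b => dotp (acol A i a) (acol A j b)

/-- Block-coherence `μ_B = max_{i ≠ j} (1/d) ρ(A_iᵀ A_j)`. -/
def blockCoh {m L d : ℕ} (A : Matrix (Fin m) (Fin L × Fin d) ℝ) : ℝ :=
  ⨆ p : {p : Fin L × Fin L // p.1 ≠ p.2},
    (1 / (d : ℝ)) * specNorm (bgram A p.1.1 p.1.2)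

/-- Sub-coherence `ν`: the maximum of `|a_iᵀ a_j|` over pairs of distinct columns lying in the
same block of `A`. -/
def subCoh {m L d : ℕ} (A : Matrix (Fin m) (Fin L × Fin d) ℝ) : ℝ :=
  ⨆ t : {t : Fin L × Fin d × Fin d // t.2.1 ≠ t.2.2},
    |dotp (acol A t.1.1 t.1.2.1) (acol A t.1.1 t.1.2.2)|

/-!
Write `P_S v = ∑ l ∈ S, A_l c_l`, so that the residual is `r = ∑ l ∈ I1, A_l y_l` with `y_l = x̃_l`
off `S` and `y_l = -c_l` on `S`. Unit columns with small sub-coherence make each diagonal block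
`A_lᵀ A_l` bounded below by `1 - (d - 1) ν`, and the off-diagonal blocks have norm at most `d μ_B`;
isolating the `l`-th term of `A_lᵀ r = ∑ l', A_lᵀ A_l' y_l'` therefore gives
`(1 - (d - 1) ν + d μ_B) ‖y_l‖ ≤ ‖A_lᵀ r‖ + d μ_B ∑ l' ∈ I1, ‖y_l'‖`.
For `l ∈ S` the correlation `A_lᵀ r` vanishes. Adding these inequalities over `S` shows
`∑ l ∈ S, ‖y_l‖ ≤ ∑ l ∈ I1 \ S, ‖x̃_l‖` as soon as `1 - (d - 1) ν - (2 k - 1) d μ_B > 0`, since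
then the sum over `I1 \ S` carries the smaller coefficient. If `x̃_l` has the largest norm among
the blocks of `I1 \ S`, then `∑ l' ∈ I1, ‖y_l'‖ ≤ 2 (K - k) ‖x̃_l‖`, and the displayed inequality
at this `l` is the bound.
-/

section EuclideanNorm

variable {ι : Type*} [Fintype ι]

lemma e2norm_eq_norm_toLp (v : ι → ℝ) : e2norm v = ‖WithLp.toLp 2 v‖ := by
  simp [e2norm, EuclideanSpace.norm_eq]

lemma e2norm_nonneg (v : ι → ℝ) : 0 ≤ e2norm v := Real.sqrt_nonneg _

lemma e2norm_zero : e2norm (0 : ι → ℝ) = 0 := by simp [e2norm]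

lemma e2norm_pos {v : ι → ℝ} (hv : v ≠ 0) : 0 < e2norm v := by
  simpa [e2norm_eq_norm_toLp] using hv

lemma e2norm_sq (v : ι → ℝ) : e2norm v ^ 2 = v ⬝ᵥ v := by
  rw [e2norm, Real.sq_sqrt (sum_nonneg fun i _ => sq_nonneg (v i))]
  simp only [dotProduct, sq]

lemma dotProduct_le_e2norm_mul_e2norm (u v : ι → ℝ) : u ⬝ᵥ v ≤ e2norm u * e2norm v :=
  Real.sum_mul_le_sqrt_mul_sqrt _ _ _

lemma mul_e2norm_le_of_mul_sq_le_dotProduct {a : ℝ} {u w : ι → ℝ}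
    (h : a * e2norm u ^ 2 ≤ u ⬝ᵥ w) : a * e2norm u ≤ e2norm w := by
  rcases eq_or_ne u 0 with rfl | hu
  · simpa [e2norm_zero] using e2norm_nonneg w
  refine le_of_mul_le_mul_left ?_ (e2norm_pos hu)
  calc e2norm u * (a * e2norm u) = a * e2norm u ^ 2 := by ring
    _ ≤ u ⬝ᵥ w := h
    _ ≤ e2norm u * e2norm w := dotProduct_le_e2norm_mul_e2norm u w

end EuclideanNorm

section SpectralNorm

open scoped Matrix.Norms.L2Operator

variable {p q : ℕ} (X : Matrix (Fin p) (Fin q) ℝ)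

lemma bddAbove_range_e2norm_mulVec_div :
    BddAbove (Set.range fun u : {u : Fin q → ℝ // u ≠ 0} => e2norm (X *ᵥ u.1) / e2norm u.1) := by
  refine ⟨‖X‖, ?_⟩
  rintro _ ⟨⟨u, hu⟩, rfl⟩
  rw [div_le_iff₀ (e2norm_pos hu), e2norm_eq_norm_toLp, e2norm_eq_norm_toLp]
  exact X.l2_opNorm_mulVec (WithLp.toLp 2 u)

lemma specNorm_nonneg : 0 ≤ specNorm X :=
  Real.iSup_nonneg fun _ => div_nonneg (e2norm_nonneg _) (e2norm_nonneg _)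

lemma e2norm_mulVec_le_specNorm_mul (u : Fin q → ℝ) :
    e2norm (X *ᵥ u) ≤ specNorm X * e2norm u := by
  rcases eq_or_ne u 0 with rfl | hu
  · simp [e2norm_zero]
  · rw [← div_le_iff₀ (e2norm_pos hu)]
    exact le_ciSup (bddAbove_range_e2norm_mulVec_div X) ⟨u, hu⟩

end SpectralNorm

section DiagonalDominance

lemma mul_e2norm_sq_le_dotProduct_mulVec {n : Type*} [Fintype n] {G : Matrix n n ℝ} {c ν : ℝ}
    (hdiag : ∀ i, c ≤ G i i) (hoff : ∀ i j, i ≠ j → |G i j| ≤ ν) (u : n → ℝ) :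
    (c - ((Fintype.card n : ℝ) - 1) * ν) * e2norm u ^ 2 ≤ u ⬝ᵥ G *ᵥ u := by
  classical
  -- AM-GM spreads `ν |u i| |u j|` evenly over `u i ^ 2` and `u j ^ 2`; adding
  -- `ν * u i ^ 2` on the diagonal makes the error term the same for all pairs.
  have entry (i j : n) : (if i = j then (c + ν) * u i ^ 2 else 0) - ν / 2 * (u i ^ 2 + u j ^ 2) ≤
      u i * (G i j * u j) := by
    split_ifs with hij
    · subst hij
      nlinarith [mul_le_mul_of_nonneg_right (hdiag i) (sq_nonneg (u i))]
    · obtain ⟨hlower, hupper⟩ := abs_le.1 (hoff i j hij)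
      nlinarith [mul_nonneg (sub_nonneg.2 hupper) (sq_nonneg (u i - u j)),
        mul_nonneg (neg_le_iff_add_nonneg.1 hlower) (sq_nonneg (u i + u j))]
  calc (c - ((Fintype.card n : ℝ) - 1) * ν) * e2norm u ^ 2
      = ∑ i, ∑ j, ((if i = j then (c + ν) * u i ^ 2 else 0) - ν / 2 * (u i ^ 2 + u j ^ 2)) := by
        simp only [e2norm_sq, dotProduct, ← sq, sum_sub_distrib, sum_ite_eq, mem_univ, if_true,
          ← mul_sum, sum_add_distrib, sum_const, card_univ, nsmul_eq_mul]
        ring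
    _ ≤ ∑ i, ∑ j, u i * (G i j * u j) := sum_le_sum fun i _ => sum_le_sum fun j _ => entry i j
    _ = u ⬝ᵥ G *ᵥ u := by simp only [dotProduct, mulVec, mul_sum]

lemma add_mul_le_norm_sum_add_mul_sum {ι E : Type*} [SeminormedAddCommGroup E] {z : ι → E}
    {a : ι → ℝ} {α β : ℝ} {I : Finset ι} {l : ι} (hl : l ∈ I) (hdiag : α * a l ≤ ‖z l‖)
    (hoff : ∀ i ∈ I, i ≠ l → ‖z i‖ ≤ β * a i) :
    (α + β) * a l ≤ ‖∑ i ∈ I, z i‖ + β * ∑ i ∈ I, a i := by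
  classical
  have hrest : ‖∑ i ∈ I.erase l, z i‖ ≤ β * ∑ i ∈ I.erase l, a i := by
    rw [mul_sum]
    exact norm_sum_le_of_le _ fun i hi => hoff i (mem_of_mem_erase hi) (ne_of_mem_erase hi)
  have htriangle : ‖z l‖ ≤ ‖∑ i ∈ I, z i‖ + ‖∑ i ∈ I.erase l, z i‖ := by
    rw [← add_sum_erase I z hl]
    exact norm_le_add_norm_add _ _
  rw [← add_sum_erase I a hl]
  linarith

variable {ι : Type*} [DecidableEq ι] {a b : ι → ℝ} {β γ : ℝ} {S I : Finset ι}

lemma sum_le_sum_sdiff_of_dominance (hS : S ⊆ I) (hγ : 2 * #S * β < γ) (hβ : 0 ≤ β)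
    (ha : ∀ l ∈ I \ S, 0 ≤ a l) (hdom : ∀ l ∈ S, γ * a l ≤ β * ∑ i ∈ I, a i) :
    ∑ l ∈ S, a l ≤ ∑ l ∈ I \ S, a l := by
  have hrest : 0 ≤ ∑ l ∈ I \ S, a l := sum_nonneg ha
  have hsum : γ * ∑ l ∈ S, a l ≤ #S * (β * (∑ l ∈ I \ S, a l + ∑ l ∈ S, a l)) := by
    rw [mul_sum, sum_sdiff hS, ← nsmul_eq_mul]
    exact sum_le_card_nsmul S _ _ hdom
  have hSβ : 0 ≤ #S * β := by positivity
  have hpos : 0 < γ - #S * β := by linarith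
  refine le_of_mul_le_mul_left ?_ hpos
  calc (γ - #S * β) * ∑ l ∈ S, a l ≤ #S * β * ∑ l ∈ I \ S, a l := by linarith
    _ ≤ (γ - #S * β) * ∑ l ∈ I \ S, a l := by gcongr; linarith

lemma sub_mul_le_of_dominance (hS : S ⊆ I) (hγ : 2 * #S * β < γ) (hβ : 0 ≤ β)
    (ha : ∀ l ∈ I \ S, 0 ≤ a l) (hdom : ∀ l ∈ I, γ * a l ≤ b l + β * ∑ i ∈ I, a i)
    (hb : ∀ l ∈ S, b l = 0) {l : ι} (hl : l ∈ I \ S) (hmax : ∀ i ∈ I \ S, a i ≤ a l) :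
    (γ - 2 * #(I \ S) * β) * a l ≤ b l := by
  have hsum : ∑ i ∈ S, a i ≤ ∑ i ∈ I \ S, a i :=
    sum_le_sum_sdiff_of_dominance hS hγ hβ ha fun i hi => by
      simpa only [hb i hi, zero_add] using hdom i (hS hi)
  have hcard : ∑ i ∈ I \ S, a i ≤ #(I \ S) * a l := by
    simpa only [nsmul_eq_mul] using sum_le_card_nsmul (I \ S) a (a l) hmax
  have htotal : β * ∑ i ∈ I, a i ≤ β * (2 * (#(I \ S) * a l)) := by
    gcongr
    rw [← sum_sdiff hS]
    linarith
  linarith [hdom l (mem_sdiff.1 hl).1]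

end DiagonalDominance

lemma sum_mulVec_piecewise_neg {ι m n R : Type*} [DecidableEq ι] [Fintype n]
    [NonUnitalNonAssocRing R] (M : ι → Matrix m n R) {S I : Finset ι} (hS : S ⊆ I)
    (c x : ι → n → R) :
    ∑ l ∈ I, M l *ᵥ S.piecewise (-c) x l = ∑ l ∈ I \ S, M l *ᵥ x l - ∑ l ∈ S, M l *ᵥ c l := by
  rw [← sum_sdiff hS, sub_eq_add_neg, ← sum_neg_distrib]
  congr 1 <;> refine sum_congr rfl fun l hl => ?_
  · rw [piecewise_eq_of_notMem _ _ _ (mem_sdiff.1 hl).2]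
  · rw [piecewise_eq_of_mem _ _ _ hl, Pi.neg_apply, mulVec_neg]

section BlockMatrix

variable {m L d : ℕ} (A : Matrix (Fin m) (Fin L × Fin d) ℝ)

/-- The `l`-th column block `A_l` of `A`, as an `m × d` matrix. Through it `blkT`, `bgram` and
the sums `∑ j, A i (l, j) * x j` become products with `A_lᵀ` and `A_l`. -/
def colBlock (l : Fin L) : Matrix (Fin m) (Fin d) ℝ := A.submatrix id (Prod.mk l)

lemma blkT_eq_transpose_mulVec (l : Fin L) (v : Fin m → ℝ) :
    blkT A l v = (colBlock A l)ᵀ *ᵥ v := rfl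

lemma bgram_eq_transpose_mul (i j : Fin L) :
    bgram A i j = (colBlock A i)ᵀ * colBlock A j := rfl

lemma sum_colBlock_mulVec (I : Finset (Fin L)) (y : Fin L → Fin d → ℝ) :
    ∑ l ∈ I, colBlock A l *ᵥ y l = fun i => ∑ l ∈ I, ∑ j, A i (l, j) * y l j := by
  ext i
  rw [Finset.sum_apply]
  rfl

lemma blkT_sum_colBlock_mulVec (l : Fin L) (I : Finset (Fin L)) (y : Fin L → Fin d → ℝ) :
    blkT A l (∑ i ∈ I, colBlock A i *ᵥ y i) = ∑ i ∈ I, bgram A l i *ᵥ y i := by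
  simp only [blkT_eq_transpose_mulVec, mulVec_sum, mulVec_mulVec, bgram_eq_transpose_mul]

lemma blockCoh_nonneg : 0 ≤ blockCoh A :=
  Real.iSup_nonneg fun _ => mul_nonneg (by positivity) (specNorm_nonneg _)

lemma abs_bgram_self_le_subCoh (l : Fin L) {i j : Fin d} (hij : i ≠ j) :
    |bgram A l l i j| ≤ subCoh A :=
  le_ciSup (f := fun t : {t : Fin L × Fin d × Fin d // t.2.1 ≠ t.2.2} =>
    |dotp (acol A t.1.1 t.1.2.1) (acol A t.1.1 t.1.2.2)|)
    (Finite.bddAbove_range _) ⟨(l, i, j), hij⟩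

variable {A}

lemma specNorm_bgram_le (hd : 0 < d) {i j : Fin L} (hij : i ≠ j) :
    specNorm (bgram A i j) ≤ d * blockCoh A := by
  have hle : 1 / (d : ℝ) * specNorm (bgram A i j) ≤ blockCoh A :=
    le_ciSup (f := fun p : {p : Fin L × Fin L // p.1 ≠ p.2} =>
      1 / (d : ℝ) * specNorm (bgram A p.1.1 p.1.2)) (Finite.bddAbove_range _) ⟨(i, j), hij⟩
  rwa [one_div, inv_mul_le_iff₀ (by exact_mod_cast hd)] at hle

lemma bgram_self_apply_self {l : Fin L} {j : Fin d} (hA : e2norm (acol A l j) = 1) :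
    bgram A l l j j = 1 := by
  rw [← one_pow 2, ← hA, e2norm_sq]
  rfl

lemma mul_e2norm_le_e2norm_bgram_self_mulVec {l : Fin L} (hA : ∀ j, e2norm (acol A l j) = 1)
    (u : Fin d → ℝ) :
    (1 - ((d : ℝ) - 1) * subCoh A) * e2norm u ≤ e2norm (bgram A l l *ᵥ u) := by
  refine mul_e2norm_le_of_mul_sq_le_dotProduct ?_
  simpa only [Fintype.card_fin] using mul_e2norm_sq_le_dotProduct_mulVec
    (fun j => (bgram_self_apply_self (hA j)).ge) (fun _ _ => abs_bgram_self_le_subCoh A l) u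

lemma mul_e2norm_le_e2norm_blkT_add (hd : 0 < d) {I : Finset (Fin L)} {l : Fin L} (hl : l ∈ I)
    (hA : ∀ j, e2norm (acol A l j) = 1) (y : Fin L → Fin d → ℝ) :
    (1 - ((d : ℝ) - 1) * subCoh A + d * blockCoh A) * e2norm (y l) ≤
      e2norm (blkT A l (∑ i ∈ I, colBlock A i *ᵥ y i)) +
        d * blockCoh A * ∑ i ∈ I, e2norm (y i) := by
  have hdiag := mul_e2norm_le_e2norm_bgram_self_mulVec hA (y l)
  have hoff : ∀ i ∈ I, i ≠ l → e2norm (bgram A l i *ᵥ y i) ≤ d * blockCoh A * e2norm (y i) :=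
    fun i _ hil => (e2norm_mulVec_le_specNorm_mul _ _).trans <|
      mul_le_mul_of_nonneg_right (specNorm_bgram_le hd hil.symm) (e2norm_nonneg _)
  rw [blkT_sum_colBlock_mulVec, e2norm_eq_norm_toLp (∑ i ∈ I, _), WithLp.toLp_sum]
  rw [e2norm_eq_norm_toLp (bgram A l l *ᵥ y l)] at hdiag
  simp only [e2norm_eq_norm_toLp (bgram A l _ *ᵥ _)] at hoff
  exact add_mul_le_norm_sum_add_mul_sum hl hdiag hoff

end BlockMatrix

lemma pos_sub_mul_of_le {a s t δ μ : ℝ} (hδ : 0 ≤ δ) (hμ : 0 ≤ μ) (hst : s ≤ t)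
    (h : 0 < a - t * δ * μ) : 0 < a - s * δ * μ :=
  h.trans_le (by gcongr)

lemma mul_iInf_le_of_mul_iSup_le {ι : Type*} {s t : Finset ι} (hst : s ⊆ t) (hs : s.Nonempty)
    (f : ι → ℝ) {c b : ℝ} (hc : 0 ≤ c) (h : c * ⨆ i : {i // i ∈ s}, f i.1 ≤ b) :
    c * ⨅ i : {i // i ∈ t}, f i.1 ≤ b := by
  obtain ⟨i, hi⟩ := hs
  refine (mul_le_mul_of_nonneg_left ?_ hc).trans h
  calc ⨅ i : {i // i ∈ t}, f i.1
      ≤ f i := ciInf_le (Finite.bddBelow_range fun i : {i // i ∈ t} => f i.1) ⟨i, hst hi⟩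
    _ ≤ ⨆ i : {i // i ∈ s}, f i.1 :=
      le_ciSup (Finite.bddAbove_range fun i : {i // i ∈ s} => f i.1) ⟨i, hi⟩

theorem stmt8_general {m L d K k : ℕ} (hd : 0 < d) (A : Matrix (Fin m) (Fin L × Fin d) ℝ)
    (hA : ∀ l j, e2norm (acol A l j) = 1)
    (μB ν : ℝ) (hμB : μB = blockCoh A) (hν : ν = subCoh A)
    (hcond : 0 < 1 - ((d : ℝ) - 1) * ν - (2 * (k : ℝ) - 1) * d * μB)
    (I1 : Finset (Fin L)) (hcard : I1.card = K)
    (S : Finset (Fin L)) (hS : S ⊆ I1) (hSk : S.card = k) (hk : k < K)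
    (xt : Fin L → Fin d → ℝ)
    (v : Fin m → ℝ) (hv : v = fun i => ∑ l ∈ I1 \ S, ∑ j, A i (l, j) * xt l j)
    (PSv : Fin m → ℝ)
    (hPSv1 : ∃ c : Fin L → Fin d → ℝ, ∀ i, PSv i = ∑ l ∈ S, ∑ j, A i (l, j) * c l j)
    (hPSv2 : ∀ l ∈ S, ∀ j, dotp (acol A l j) (fun i => v i - PSv i) = 0) :
    (1 - ((d : ℝ) - 1) * ν - (2 * (K : ℝ) - 2 * (k : ℝ) - 1) * d * μB) *
        (⨆ l : {l : Fin L // l ∈ I1 \ S}, e2norm (xt l.1)) ≤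
      ⨆ l : {l : Fin L // l ∈ I1}, e2norm (blkT A l.1 (fun i => v i - PSv i)) := by
  subst hμB hν hcard hSk
  obtain ⟨c, hc⟩ := hPSv1
  set y := S.piecewise (-c) xt
  have hy : ∀ l ∈ I1 \ S, y l = xt l := fun l hl =>
    piecewise_eq_of_notMem _ _ _ (mem_sdiff.1 hl).2
  have hr : (fun i => v i - PSv i) = ∑ l ∈ I1, colBlock A l *ᵥ y l := by
    rw [sum_mulVec_piecewise_neg _ hS, sum_colBlock_mulVec, sum_colBlock_mulVec, ← hv, ← funext hc]
    rfl
  have horth : ∀ l ∈ S, e2norm (blkT A l fun i => v i - PSv i) = 0 := fun l hl => by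
    rw [show blkT A l (fun i => v i - PSv i) = 0 from funext (hPSv2 l hl), e2norm_zero]
  have hdom : ∀ l ∈ I1, (1 - ((d : ℝ) - 1) * subCoh A + d * blockCoh A) * e2norm (y l) ≤
      e2norm (blkT A l fun i => v i - PSv i) + d * blockCoh A * ∑ i ∈ I1, e2norm (y i) :=
    fun l hl => hr ▸ mul_e2norm_le_e2norm_blkT_add hd hl (hA l) y
  have : Nonempty {l // l ∈ I1 \ S} := (sdiff_nonempty_of_card_lt_card hk).to_subtype
  obtain ⟨⟨l, hl⟩, hmax⟩ :=
    exists_eq_ciSup_of_finite (f := fun l : {l // l ∈ I1 \ S} => e2norm (xt l.1))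
  have hle : ∀ i ∈ I1 \ S, e2norm (y i) ≤ e2norm (y l) := fun i hi => by
    rw [hy i hi, hy l hl, hmax]
    exact le_ciSup (Finite.bddAbove_range fun l : {l // l ∈ I1 \ S} => e2norm (xt l.1)) ⟨i, hi⟩
  have hbound := sub_mul_le_of_dominance hS (by linarith)
    (mul_nonneg d.cast_nonneg (blockCoh_nonneg A)) (fun l _ => e2norm_nonneg (y l)) hdom horth
    hl hle
  rw [hy l hl, cast_card_sdiff hS] at hbound
  rw [← hmax]
  exact le_trans (by linarith) (le_ciSup (Finite.bddAbove_range fun l : {l // l ∈ I1} =>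
    e2norm (blkT A l.1 fun i => v i - PSv i)) ⟨l, (mem_sdiff.1 hl).1⟩)

/-- **Eq. (31) of the paper.**  Assume `1 - (d-1)ν - (2K-1)dμ_B > 0`.  For `S ⊆ I1` with
`|S| = k < K`, `v = Σ_{l ∈ I1∖S} A_l x̃_l` and `P_S v` the orthogonal projection of `v` onto
the span of the blocks `A_l, l ∈ S`,
`max_{l ∈ I1} ‖A_lᵀ (I - P_S) v‖₂ ≥ (1 - (d-1)ν - (2K-2k-1)dμ_B) · min_{l ∈ I1} ‖x̃_l‖₂`,
and this lower bound is positive whenever `min_{l ∈ I1} ‖x̃_l‖₂ > 0`. -/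
theorem stmt8 {m L d K k : ℕ}
    (hm : m < L * d) (hd : 0 < d)
    (A : Matrix (Fin m) (Fin L × Fin d) ℝ)
    (hA : ∀ l j, e2norm (acol A l j) = 1)
    (μB ν : ℝ) (hμB : μB = blockCoh A) (hν : ν = subCoh A)
    (hcond : 0 < 1 - ((d : ℝ) - 1) * ν - (2 * (K : ℝ) - 1) * d * μB)
    (I1 : Finset (Fin L)) (hcard : I1.card = K) (hKL : K < L)
    (S : Finset (Fin L)) (hS : S ⊆ I1) (hSk : S.card = k) (hk : k < K)
    (xt : Fin L → Fin d → ℝ)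
    (v : Fin m → ℝ) (hv : v = fun i => ∑ l ∈ I1 \ S, ∑ j, A i (l, j) * xt l j)
    (PSv : Fin m → ℝ)
    (hPSv1 : ∃ c : Fin L → Fin d → ℝ, ∀ i, PSv i = ∑ l ∈ S, ∑ j, A i (l, j) * c l j)
    (hPSv2 : ∀ l ∈ S, ∀ j, dotp (acol A l j) (fun i => v i - PSv i) = 0) :
    (1 - ((d : ℝ) - 1) * ν - (2 * (K : ℝ) - 2 * (k : ℝ) - 1) * d * μB) *
        (⨅ l : {l : Fin L // l ∈ I1}, e2norm (xt l.1)) ≤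
      (⨆ l : {l : Fin L // l ∈ I1}, e2norm (blkT A l.1 (fun i => v i - PSv i))) ∧
    (0 < ⨅ l : {l : Fin L // l ∈ I1}, e2norm (xt l.1) →
      0 < (1 - ((d : ℝ) - 1) * ν - (2 * (K : ℝ) - 2 * (k : ℝ) - 1) * d * μB) *
        (⨅ l : {l : Fin L // l ∈ I1}, e2norm (xt l.1))) := by
  have hμ : 0 ≤ μB := hμB ▸ blockCoh_nonneg A
  have hkK : (k : ℝ) ≤ K := by exact_mod_cast hk.le
  have hC := pos_sub_mul_of_le (s := 2 * (K : ℝ) - 2 * k - 1) d.cast_nonneg hμ (by linarith) hcond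
  have hcond' := pos_sub_mul_of_le (s := 2 * (k : ℝ) - 1) d.cast_nonneg hμ (by linarith) hcond
  have hne : (I1 \ S).Nonempty := sdiff_nonempty_of_card_lt_card (by omega)
  exact ⟨mul_iInf_le_of_mul_iSup_le sdiff_subset hne (fun l => e2norm (xt l)) hC.le
    (stmt8_general hd A hA μB ν hμB hν hcond' I1 hcard S hS hSk hk xt v hv PSv hPSv1 hPSv2),
    mul_pos hC⟩
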